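/- If 1 ≤ p ≤ 2, then for any initialization x^{(0)} ∈ ℝ^d, the sequence of IRLS iterates (x^{(t)}) converges to the unique global minimizer x* of Φ. -/

import Mathlib

open scoped ContDiff RealInnerProductSpace
open Filter

/-!
IRLS is a majorize-minimize scheme. As `p / 2 ≤ 1`, the power `s ↦ s ^ (p / 2)` lies below its
tangents, so the objective lies below a weighted sum of squared distances to the points `a j`, whose
minimizer is the next iterate; hence the objective strictly decreases away from fixed points, and by
compactness every cluster point of the iterates is a fixed point. As `1 ≤ p`, the objective lies
strictly above its tangents, whose slope at a fixed point is zero, so a fixed point is the strict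
global minimizer and in particular is unique.
-/

section Lyapunov

variable {X α : Type*} [TopologicalSpace X] [TopologicalSpace α] [LinearOrder α]
  {K : Set X} {T : X → X} {f : X → α}

theorem exists_isFixedPt_of_isCompact_of_apply_lt [ClosedIicTopology α] (hK : IsCompact K)
    (hne : K.Nonempty) (hTK : Set.MapsTo T K K) (hf : ContinuousOn f K)
    (hlt : ∀ y ∈ K, ¬Function.IsFixedPt T y → f (T y) < f y) :
    ∃ z ∈ K, Function.IsFixedPt T z := by
  obtain ⟨z, hzK, hz⟩ := hK.exists_isMinOn hne hf
  exact ⟨z, hzK, by_contra fun hfix ↦ (hlt z hzK hfix).not_ge (hz (hTK hzK))⟩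

variable [OrderClosedTopology α] {x : ℕ → X} {z : X}

theorem isFixedPt_of_mapClusterPt_of_apply_lt (hT : Continuous T) (hf : Continuous f)
    (hlt : ∀ y, ¬Function.IsFixedPt T y → f (T y) < f y)
    (hx : ∀ t, x (t + 1) = T (x t)) (hz : MapClusterPt z atTop x) : Function.IsFixedPt T z := by
  by_contra hfix
  have hle (y : X) : f (T y) ≤ f y := by
    by_cases hy : Function.IsFixedPt T y
    · rw [hy.eq]
    · exact (hlt y hy).le
  have hanti : Antitone (f ∘ x) := antitone_nat_of_succ_le fun t ↦ by
    simpa only [Function.comp_apply, hx] using hle (x t)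
  have hlower (t : ℕ) : f z ≤ f (x t) :=
    isClosed_Iic.mem_of_mapClusterPt (hz.continuousAt_comp hf.continuousAt)
      ((eventually_ge_atTop t).mono fun _ hs ↦ hanti hs)
  obtain ⟨t, ht⟩ : ∃ t, f (T (x t)) < f z :=
    (hz.frequently ((hf.comp hT).continuousAt.eventually_lt continuousAt_const (hlt z hfix))).exists
  exact ht.not_ge (hx t ▸ hlower (t + 1))

theorem tendsto_of_isCompact_of_apply_lt (hK : IsCompact K) (hxK : ∀ᶠ t in atTop, x t ∈ K)
    (hT : Continuous T) (hf : Continuous f) (hlt : ∀ y, ¬Function.IsFixedPt T y → f (T y) < f y)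
    (hx : ∀ t, x (t + 1) = T (x t)) (huniq : ∀ y ∈ K, Function.IsFixedPt T y → y = z) :
    Tendsto x atTop (nhds z) :=
  hK.tendsto_nhds_of_unique_mapClusterPt hxK fun y hyK hy ↦
    huniq y hyK (isFixedPt_of_mapClusterPt_of_apply_lt hT hf hlt hx hy)

end Lyapunov

section CenterMass

theorem sum_smul_sub_eq_sum_smul_sub_centerMass {𝕜 E ι : Type*} [Field 𝕜] [AddCommGroup E]
    [Module 𝕜 E] {s : Finset ι} {m : ι → 𝕜} (hm : ∑ i ∈ s, m i ≠ 0) (a : ι → E) (y : E) :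
    ∑ i ∈ s, m i • (y - a i) = (∑ i ∈ s, m i) • (y - s.centerMass m a) := by
  simp only [smul_sub, Finset.sum_sub_distrib, Finset.centerMass, Finset.sum_smul,
    smul_inv_smul₀ hm]

variable {E ι : Type*} [NormedAddCommGroup E] [InnerProductSpace ℝ E]

theorem sum_mul_norm_centerMass_sub_sq {s : Finset ι} {m : ι → ℝ} (hm : ∑ i ∈ s, m i ≠ 0)
    (a : ι → E) (y : E) :
    ∑ i ∈ s, m i * ‖s.centerMass m a - a i‖ ^ 2 =
      ∑ i ∈ s, m i * ‖y - a i‖ ^ 2 - (∑ i ∈ s, m i) * ‖y - s.centerMass m a‖ ^ 2 := by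
  set c := s.centerMass m a with hc
  have hexpand (i : ι) : m i * ‖c - a i‖ ^ 2 =
      m i * ‖y - a i‖ ^ 2 - 2 * ⟪m i • (y - a i), y - c⟫ + m i * ‖y - c‖ ^ 2 := by
    rw [← sub_sub_sub_cancel_left (a i) c y, norm_sub_sq_real, real_inner_smul_left]
    ring
  simp only [hexpand, Finset.sum_add_distrib, Finset.sum_sub_distrib, ← Finset.mul_sum,
    ← Finset.sum_mul, ← sum_inner]
  rw [sum_smul_sub_eq_sum_smul_sub_centerMass hm, ← hc, real_inner_smul_left,
    real_inner_self_eq_norm_sq]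
  ring

end CenterMass

section Tangents

theorem rpow_le_rpow_add_mul_sub {q s t : ℝ} (hq0 : 0 ≤ q) (hq1 : q ≤ 1) (hs : 0 < s)
    (ht : 0 ≤ t) : t ^ q ≤ s ^ q + q * s ^ (q - 1) * (t - s) := by
  have bernoulli := rpow_one_add_le_one_add_mul_self (s := t / s - 1) (p := q)
    (by linarith [div_nonneg ht hs.le]) hq0 hq1
  rw [add_sub_cancel, Real.div_rpow ht hs.le, div_le_iff₀ (Real.rpow_pos_of_pos hs q)] at bernoulli
  refine bernoulli.trans_eq ?_
  rw [Real.rpow_sub_one hs.ne']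
  field_simp

theorem rpow_add_mul_sub_le_rpow {q s t : ℝ} (hq : 1 ≤ q) (hs : 0 < s) (ht : 0 ≤ t) :
    s ^ q + q * s ^ (q - 1) * (t - s) ≤ t ^ q := by
  have bernoulli := one_add_mul_self_le_rpow_one_add (s := t / s - 1) (p := q)
    (by linarith [div_nonneg ht hs.le]) hq
  rw [add_sub_cancel, Real.div_rpow ht hs.le, le_div_iff₀ (Real.rpow_pos_of_pos hs q)] at bernoulli
  refine le_of_eq_of_le ?_ bernoulli
  rw [Real.rpow_sub_one hs.ne']
  field_simp

theorem rpow_half_add_mul_sqrt_sub_le {p s t : ℝ} (hp : 1 ≤ p) (hs : 0 < s) (ht : 0 ≤ t) :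
    s ^ (p / 2) + p * s ^ (p / 2 - 1) * (√(s * t) - s) ≤ t ^ (p / 2) := by
  have hsqrt : 0 < √s := Real.sqrt_pos.2 hs
  have hpow : √s ^ (p - 1) = s ^ (p / 2 - 1) * √s := by
    rw [show p / 2 - 1 = (p - 2) / 2 by ring, Real.rpow_div_two_eq_sqrt _ hs.le,
      ← Real.rpow_add_one hsqrt.ne']
    ring_nf
  calc s ^ (p / 2) + p * s ^ (p / 2 - 1) * (√(s * t) - s)
      = √s ^ p + p * √s ^ (p - 1) * (√t - √s) := by
        rw [hpow, Real.rpow_div_two_eq_sqrt p hs.le, Real.sqrt_mul hs.le]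
        linear_combination (p * s ^ (p / 2 - 1)) * Real.mul_self_sqrt hs.le
    _ ≤ √t ^ p := rpow_add_mul_sub_le_rpow hp hsqrt t.sqrt_nonneg
    _ = t ^ (p / 2) := (Real.rpow_div_two_eq_sqrt p ht).symm

variable {E : Type*} [NormedAddCommGroup E] [InnerProductSpace ℝ E] {ε : ℝ} {u v : E}

/-- The strict Cauchy–Schwarz inequality for `(u, √ε)` and `(v, √ε)`, which are never parallel. -/
theorem inner_add_lt_sqrt_mul (hε : 0 < ε) (huv : u ≠ v) :
    ⟪u, v⟫ + ε < √((‖u‖ ^ 2 + ε) * (‖v‖ ^ 2 + ε)) := by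
  refine Real.lt_sqrt_of_sq_lt ?_
  have hcs : ⟪u, v⟫ ^ 2 ≤ (‖u‖ * ‖v‖) ^ 2 :=
    sq_le_sq' (neg_le_of_abs_le (abs_real_inner_le_norm u v)) (real_inner_le_norm u v)
  have hgap : 0 < ε * ‖u - v‖ ^ 2 := by
    have := norm_pos_iff.2 (sub_ne_zero.2 huv)
    positivity
  rw [norm_sub_sq_real] at hgap
  linarith

theorem norm_sq_add_rpow_add_mul_inner_lt {p : ℝ} (hε : 0 < ε) (hp : 1 ≤ p) (huv : u ≠ v) :
    (‖u‖ ^ 2 + ε) ^ (p / 2) + p * (‖u‖ ^ 2 + ε) ^ (p / 2 - 1) * ⟪u, v - u⟫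
      < (‖v‖ ^ 2 + ε) ^ (p / 2) := by
  have : 0 < p * (‖u‖ ^ 2 + ε) ^ (p / 2 - 1) := by positivity
  have hinner : ⟪u, v - u⟫ < √((‖u‖ ^ 2 + ε) * (‖v‖ ^ 2 + ε)) - (‖u‖ ^ 2 + ε) := by
    rw [inner_sub_right, real_inner_self_eq_norm_sq]
    linarith [inner_add_lt_sqrt_mul hε huv]
  calc _ < (‖u‖ ^ 2 + ε) ^ (p / 2) + p * (‖u‖ ^ 2 + ε) ^ (p / 2 - 1) *
        (√((‖u‖ ^ 2 + ε) * (‖v‖ ^ 2 + ε)) - (‖u‖ ^ 2 + ε)) := by gcongr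
    _ ≤ _ := rpow_half_add_mul_sqrt_sub_le hp (by positivity) (by positivity)

end Tangents

section Irls

variable {E ι : Type*} [NormedAddCommGroup E] {a : ι → E} {w : ι → ℝ} {ε p : ℝ}

theorem continuous_norm_sub_sq_add_rpow (hε : 0 < ε) (c : E) (q : ℝ) :
    Continuous fun x : E ↦ (‖x - c‖ ^ 2 + ε) ^ q :=
  Continuous.rpow_const (by fun_prop) fun x ↦ Or.inl (by positivity)

/-- The weight `μ j` that the IRLS iteration at `x` gives to the point `a j`. -/
noncomputable def irlsWeight (a : ι → E) (w : ι → ℝ) (ε p : ℝ) (x : E) (j : ι) : ℝ :=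
  w j * (‖x - a j‖ ^ 2 + ε) ^ (p / 2 - 1)

theorem irlsWeight_pos (hw : ∀ j, 0 < w j) (hε : 0 < ε) (x : E) (j : ι) :
    0 < irlsWeight a w ε p x j :=
  mul_pos (hw j) (by positivity)

theorem continuous_irlsWeight (hε : 0 < ε) (j : ι) :
    Continuous fun x ↦ irlsWeight a w ε p x j :=
  continuous_const.mul (continuous_norm_sub_sq_add_rpow hε (a j) _)

variable [Fintype ι]

theorem sum_irlsWeight_pos [Nonempty ι] (hw : ∀ j, 0 < w j) (hε : 0 < ε) (x : E) :
    0 < ∑ j, irlsWeight a w ε p x j :=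
  Finset.sum_pos (fun j _ ↦ irlsWeight_pos hw hε x j) Finset.univ_nonempty

/-- The objective `Φ` of the IRLS iteration: a weighted sum of the `p`-th powers of the distances to
the points `a j`, smoothed by `ε`. -/
noncomputable def irlsObjective (a : ι → E) (w : ι → ℝ) (ε p : ℝ) (x : E) : ℝ :=
  ∑ j, w j * (‖x - a j‖ ^ 2 + ε) ^ (p / 2)

theorem continuous_irlsObjective (hε : 0 < ε) : Continuous (irlsObjective a w ε p) :=
  continuous_finsetSum _ fun j _ ↦
    continuous_const.mul (continuous_norm_sub_sq_add_rpow hε (a j) _)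

theorem irlsObjective_le_add_sum_irlsWeight (hw : ∀ j, 0 ≤ w j) (hε : 0 < ε) (hp0 : 0 ≤ p)
    (hp2 : p ≤ 2) (x y : E) :
    irlsObjective a w ε p y ≤ irlsObjective a w ε p x +
      p / 2 * ∑ j, irlsWeight a w ε p x j * (‖y - a j‖ ^ 2 - ‖x - a j‖ ^ 2) := by
  rw [irlsObjective, irlsObjective, Finset.mul_sum, ← Finset.sum_add_distrib]
  refine Finset.sum_le_sum fun j _ ↦ ?_
  have htangent := rpow_le_rpow_add_mul_sub (q := p / 2) (s := ‖x - a j‖ ^ 2 + ε)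
    (t := ‖y - a j‖ ^ 2 + ε) (by linarith) (by linarith) (by positivity) (by positivity)
  refine (mul_le_mul_of_nonneg_left htangent (hw j)).trans_eq ?_
  rw [irlsWeight]
  ring

section NormedSpace

variable [NormedSpace ℝ E]

/-- The IRLS iteration map: `x` is sent to the center of mass of the points `a j` with the weights
`irlsWeight a w ε p x j`. -/
noncomputable def irlsStep (a : ι → E) (w : ι → ℝ) (ε p : ℝ) (x : E) : E :=
  Finset.univ.centerMass (irlsWeight a w ε p x) a

variable [Nonempty ι]

theorem irlsStep_mem_convexHull (hw : ∀ j, 0 < w j) (hε : 0 < ε) (x : E) :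
    irlsStep a w ε p x ∈ convexHull ℝ (Set.range a) :=
  Finset.centerMass_mem_convexHull _ (fun j _ ↦ (irlsWeight_pos hw hε x j).le)
    (sum_irlsWeight_pos hw hε x) fun j _ ↦ Set.mem_range_self j

theorem continuous_irlsStep (hw : ∀ j, 0 < w j) (hε : 0 < ε) :
    Continuous (irlsStep a w ε p) :=
  ((continuous_finsetSum _ fun j _ ↦ continuous_irlsWeight hε j).inv₀
    fun x ↦ (sum_irlsWeight_pos hw hε x).ne').smul
    (continuous_finsetSum _ fun j _ ↦ (continuous_irlsWeight hε j).smul continuous_const)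

end NormedSpace

variable [InnerProductSpace ℝ E] [Nonempty ι]

theorem irlsObjective_irlsStep_le (hw : ∀ j, 0 < w j) (hε : 0 < ε) (hp0 : 0 ≤ p) (hp2 : p ≤ 2)
    (x : E) :
    irlsObjective a w ε p (irlsStep a w ε p x) ≤ irlsObjective a w ε p x -
      p / 2 * ((∑ j, irlsWeight a w ε p x j) * ‖x - irlsStep a w ε p x‖ ^ 2) := by
  refine (irlsObjective_le_add_sum_irlsWeight (fun j ↦ (hw j).le) hε hp0 hp2 x _).trans_eq ?_
  simp only [mul_sub, Finset.sum_sub_distrib]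
  rw [irlsStep, sum_mul_norm_centerMass_sub_sq (sum_irlsWeight_pos hw hε x).ne' a x]
  ring

theorem irlsObjective_irlsStep_lt (hw : ∀ j, 0 < w j) (hε : 0 < ε) (hp0 : 0 < p) (hp2 : p ≤ 2)
    {x : E} (hx : ¬Function.IsFixedPt (irlsStep a w ε p) x) :
    irlsObjective a w ε p (irlsStep a w ε p x) < irlsObjective a w ε p x := by
  refine (irlsObjective_irlsStep_le hw hε hp0.le hp2 x).trans_lt (sub_lt_self _ ?_)
  have hsum := sum_irlsWeight_pos (a := a) (p := p) hw hε x
  have hdist : 0 < ‖x - irlsStep a w ε p x‖ := norm_pos_iff.2 (sub_ne_zero.2 (Ne.symm hx))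
  positivity

theorem irlsObjective_add_mul_inner_lt (hw : ∀ j, 0 < w j) (hε : 0 < ε) (hp : 1 ≤ p) {x y : E}
    (hyx : y ≠ x) :
    irlsObjective a w ε p x +
      p * ((∑ j, irlsWeight a w ε p x j) * ⟪x - irlsStep a w ε p x, y - x⟫) <
        irlsObjective a w ε p y := by
  have hterm (j : ι) : w j * (‖x - a j‖ ^ 2 + ε) ^ (p / 2) +
      p * ⟪irlsWeight a w ε p x j • (x - a j), y - x⟫ < w j * (‖y - a j‖ ^ 2 + ε) ^ (p / 2) := by
    have htangent := norm_sq_add_rpow_add_mul_inner_lt hε hp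
      ((sub_left_injective (b := a j)).ne hyx.symm)
    refine lt_of_eq_of_lt ?_ (mul_lt_mul_of_pos_left htangent (hw j))
    rw [real_inner_smul_left, irlsWeight, sub_sub_sub_cancel_right]
    ring
  refine lt_of_eq_of_lt ?_
    (Finset.sum_lt_sum_of_nonempty Finset.univ_nonempty fun j _ ↦ hterm j)
  rw [Finset.sum_add_distrib, ← Finset.mul_sum, ← sum_inner, irlsStep,
    sum_smul_sub_eq_sum_smul_sub_centerMass (sum_irlsWeight_pos hw hε x).ne',
    real_inner_smul_left, irlsObjective]

theorem irlsObjective_lt_of_isFixedPt (hw : ∀ j, 0 < w j) (hε : 0 < ε) (hp : 1 ≤ p) {x y : E}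
    (hx : Function.IsFixedPt (irlsStep a w ε p) x) (hyx : y ≠ x) :
    irlsObjective a w ε p x < irlsObjective a w ε p y := by
  simpa only [hx.eq, sub_self, inner_zero_left, mul_zero, add_zero] using
    irlsObjective_add_mul_inner_lt (a := a) hw hε hp hyx

end Irls

theorem stmt_16_general {E ι : Type*} [NormedAddCommGroup E] [InnerProductSpace ℝ E] [Fintype ι]
    [Nonempty ι] (a : ι → E) {w : ι → ℝ} (hw : ∀ j, 0 < w j) {ε : ℝ} (hε : 0 < ε)
    {p : ℝ} (hp1 : 1 ≤ p) (hp2 : p ≤ 2) :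
    ∃ xstar : E, (∀ y, y ≠ xstar → irlsObjective a w ε p xstar < irlsObjective a w ε p y) ∧
      ∀ x : ℕ → E, (∀ t, x (t + 1) = irlsStep a w ε p (x t)) → Tendsto x atTop (nhds xstar) := by
  have hK : IsCompact (convexHull ℝ (Set.range a)) := (Set.finite_range a).isCompact_convexHull ℝ
  have hmem := irlsStep_mem_convexHull (a := a) (p := p) hw hε
  have hΦ : Continuous (irlsObjective a w ε p) := continuous_irlsObjective hε
  have hlt (y : E) (hy : ¬Function.IsFixedPt (irlsStep a w ε p) y) :=
    irlsObjective_irlsStep_lt hw hε (by linarith) hp2 hy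
  obtain ⟨xstar, -, hfix⟩ := exists_isFixedPt_of_isCompact_of_apply_lt hK
    (Set.range_nonempty a).convexHull (fun y _ ↦ hmem y) hΦ.continuousOn fun y _ ↦ hlt y
  have hmin (y : E) := irlsObjective_lt_of_isFixedPt (y := y) hw hε hp1 hfix
  have huniq (y : E) (hy : Function.IsFixedPt (irlsStep a w ε p) y) : y = xstar := by
    by_contra hne
    exact (hmin y hne).asymm (irlsObjective_lt_of_isFixedPt hw hε hp1 hy (Ne.symm hne))
  refine ⟨xstar, hmin, fun x hx ↦ tendsto_of_isCompact_of_apply_lt hK ?_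
    (continuous_irlsStep hw hε) hΦ hlt hx fun y _ hy ↦ huniq y hy⟩
  rw [← map_add_atTop_eq_nat 1]
  exact eventually_map.2 (.of_forall fun t ↦ hx t ▸ hmem (x t))

theorem stmt_16
    (d n : ℕ) (hd : 1 ≤ d) (hn : 1 ≤ n)
    (a : Fin n → EuclideanSpace ℝ (Fin d))
    (w : Fin n → ℝ) (hw : ∀ j, 0 < w j)
    (ε : ℝ) (hε : 0 < ε)
    (p : ℝ) (hp1 : 1 ≤ p) (hp2 : p ≤ 2)
    (Φ : EuclideanSpace ℝ (Fin d) → ℝ)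
    (hΦ : ∀ x, Φ x = ∑ j, w j * (‖x - a j‖ ^ 2 + ε) ^ (p / 2))
    (x : ℕ → EuclideanSpace ℝ (Fin d))
    (hx : ∀ t, x (t + 1) =
      (∑ j, w j * (‖x t - a j‖ ^ 2 + ε) ^ (p / 2 - 1))⁻¹ •
        ∑ j, (w j * (‖x t - a j‖ ^ 2 + ε) ^ (p / 2 - 1)) • a j)
    (xstar : EuclideanSpace ℝ (Fin d))
    (hmin : ∀ y, Φ xstar ≤ Φ y)
    (huniq : ∀ z, (∀ y, Φ z ≤ Φ y) → z = xstar) :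
    Tendsto x atTop (nhds xstar) := by
  have : Nonempty (Fin n) := ⟨⟨0, hn⟩⟩
  obtain ⟨z, hz, hlim⟩ := stmt_16_general a hw hε hp1 hp2
  obtain rfl : Φ = irlsObjective a w ε p := funext hΦ
  obtain rfl : xstar = z := by_contra fun hne ↦ (hz xstar hne).not_ge (hmin z)
  exact hlim x hx
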